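/- Let q ∈ (0,1), α ∈ (-1,∞), and m, n ∈ ℕ₀. Then ∫_0^∞ L_m^{(α)}(x;q) L_n^{(α)}(x;q) · x^α / (-x;q)_∞ dx = -(δ_{m,n} / q^n) · A, where A = π (q^{-α};q)_∞ (q^{α+1};q)_n / ( sin(πα) (q;q)_∞ (q;q)_n ) if α ∈ (-1,∞)\ℕ₀, and A = (q^{n+1};q)_α (log q) / q^{α(α+1)/2} if α ∈ ℕ₀ (here δ_{m,n} is the Kronecker delta). -/

import Mathlib

/-!
Put `M(s) = ∫_0^∞ x^{s-1}/(-x;q)_∞ dx` for `s > 0` (`mI` below). The proof separates into the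
orthogonality of the polynomials, which only involves the ratios `M(s+k)/M(s)`, and the value of
the single integral `M(α+1)`.

*Moments.* Since `(-x;q)_∞ = (1+x)(-qx;q)_∞`, rescaling `x ↦ qx` gives
`M(s+1) = (q^{-s} - 1) M(s)` (`mI_add_one`). With `a = q^{α+1}` the `k`-th moment of the weight is
therefore `M(α+1) (a;q)_k a^{-k} q^{-k(k-1)/2}` (`moment_eq`).

*Orthogonality.* Integrating `L_n` against `x^j` leaves the sum
`∑_k (q^{-n};q)_k/(q;q)_k q^{(n-j)k} (aq^k;q)_j`. Expanding the last factor one linear factor at a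
time reduces it to the terminating `q`-binomial theorem, which shows that it is `0` for `j < n` and
`(q^{-n};q)_n` for `j = n` (`q_sum`, `lag_moment`). Only the leading coefficient of `L_m` then
contributes, and the integral is `δ_{mn} q^{-n} M(α+1) (a;q)_n/(q;q)_n` (`orthogonality`).

*The value of `M`.* Truncate the product: `M_N(s) = ∫_0^∞ x^{s-1}/(-x;q)_N dx`. The two
factorizations `(-x;q)_{N+1} = (1+x)(-qx;q)_N = (-x;q)_N(1+xq^N)` give
`(1-q^N) M_{N+1}(s) = (1-q^{N-s}) M_N(s)` (`mN_succ`). For `0 < s < 1` this recurrence starts at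
Euler's `M_1(s) = π/sin(πs)`; for `s = 1` it starts at `M_2(1) = -log q/(1-q)`. Dominated
convergence as `N → ∞` yields Ramanujan's formula
`M(s) = π (q^{1-s};q)_∞/(sin(πs)(q;q)_∞)` for `0 < s < 1`, and `M(1) = -log q`. The relation
`M(s+1) = (q^{-s}-1)M(s)` extends both to all arguments needed (`mI_reflect`, `mI_nat`).
-/

open scoped Real

/-- The complex `q`-Pochhammer symbol `(a;q)_n`. -/
noncomputable def qP (a q : ℂ) (n : ℕ) : ℂ := ∏ k ∈ Finset.range n, (1 - a * q ^ k)

/-- The infinite complex `q`-Pochhammer symbol `(a;q)_∞`. -/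
noncomputable def qPInf (a q : ℂ) : ℂ := ∏' k : ℕ, (1 - a * q ^ k)

/-- The basic hypergeometric series `ᵣφₛ(a₁,…,aᵣ; b₁,…,bₛ; q, z)`. -/
noncomputable def qHyp (A B : List ℂ) (q z : ℂ) : ℂ :=
  ∑' k : ℕ, ((A.map fun a => qP a q k).prod / (qP q q k * (B.map fun b => qP b q k).prod)) *
    ((-1 : ℂ) ^ k * q ^ (k * (k - 1) / 2)) ^ (1 + B.length - A.length) * z ^ k

/-- The positive real power `q ^ e` of `0 < q`, viewed as a complex number. -/
noncomputable def rq (q e : ℝ) : ℂ := ((q ^ e : ℝ) : ℂ)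

/-- The `q`-Laguerre polynomial `Lₙ^{(α)}(x; q)`. -/
noncomputable def qLag (n : ℕ) (α q : ℝ) (x : ℂ) : ℂ :=
  (qP (rq q (α + 1)) q n / qP q q n) *
    qHyp [(q : ℂ) ^ (-(n : ℤ))] [rq q (α + 1)] q (-(rq q ((n : ℝ) + α + 1)) * x)


open MeasureTheory Set Filter Topology

/-! ### The products `(-x;q)_N` and `(-x;q)_∞` -/

/-- The real finite product `(-x;q)_N = ∏_{k<N} (1 + x q^k)`. -/
noncomputable def pN (q : ℝ) (N : ℕ) (x : ℝ) : ℝ := ∏ k ∈ Finset.range N, (1 + x * q ^ k)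

/-- The real infinite product `(-x;q)_∞`. -/
noncomputable def pI (q : ℝ) (x : ℝ) : ℝ := ∏' k : ℕ, (1 + x * q ^ k)

lemma pN_succ (q : ℝ) (N : ℕ) (x : ℝ) : pN q (N + 1) x = pN q N x * (1 + x * q ^ N) :=
  Finset.prod_range_succ _ _

lemma pN_succ' (q : ℝ) (N : ℕ) (x : ℝ) : pN q (N + 1) x = (1 + x) * pN q N (q * x) := by
  unfold pN
  rw [Finset.prod_range_succ', mul_comm]
  simp only [pow_zero, mul_one]
  congr 1
  refine Finset.prod_congr rfl fun k _ => ?_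
  ring

lemma one_le_pN {q : ℝ} (hq : 0 < q) (N : ℕ) {x : ℝ} (hx : 0 < x) : 1 ≤ pN q N x := by
  induction N with
  | zero => simp [pN]
  | succ N ih =>
    rw [pN_succ]
    exact one_le_mul_of_one_le_of_one_le ih (by have : 0 < x * q ^ N := by positivity
                                                linarith)

lemma pow_le_pN {q : ℝ} (hq : 0 < q) (hq1 : q < 1) (N : ℕ) {x : ℝ} (hx : 0 < x) :
    (q ^ N) ^ N * x ^ N ≤ pN q N x := by
  rw [← mul_pow]
  conv_lhs => rw [← Finset.card_range N, ← Finset.prod_const]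
  unfold pN
  refine Finset.prod_le_prod (fun _ _ => by positivity) fun k hk => ?_
  have h1 : q ^ N ≤ q ^ k := pow_le_pow_of_le_one hq.le hq1.le (Finset.mem_range.1 hk).le
  rw [Finset.card_range]
  nlinarith

lemma pN_mono {q : ℝ} (hq : 0 < q) {x : ℝ} (hx : 0 < x) : Monotone fun N => pN q N x := by
  refine monotone_nat_of_le_succ fun N => ?_
  rw [pN_succ]
  have h1 := one_le_pN hq N hx
  have : 0 < x * q ^ N := by positivity
  nlinarith

lemma summable_mul_pow {q : ℝ} (hq : 0 < q) (hq1 : q < 1) (x : ℝ) :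
    Summable fun k : ℕ => x * q ^ k :=
  (summable_geometric_of_lt_one hq.le hq1).mul_left x

lemma multipliable_pI {q : ℝ} (hq : 0 < q) (hq1 : q < 1) (x : ℝ) :
    Multipliable fun k : ℕ => 1 + x * q ^ k :=
  Real.multipliable_one_add_of_summable (summable_mul_pow hq hq1 x)

lemma tendsto_pN {q : ℝ} (hq : 0 < q) (hq1 : q < 1) (x : ℝ) :
    Tendsto (fun N => pN q N x) atTop (𝓝 (pI q x)) :=
  (multipliable_pI hq hq1 x).hasProd.tendsto_prod_nat

lemma pN_le_pI {q : ℝ} (hq : 0 < q) (hq1 : q < 1) (N : ℕ) {x : ℝ} (hx : 0 < x) :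
    pN q N x ≤ pI q x :=
  (pN_mono hq hx).ge_of_tendsto (tendsto_pN hq hq1 x) N

lemma pI_eq {q : ℝ} (hq : 0 < q) (hq1 : q < 1) (x : ℝ) : pI q x = (1 + x) * pI q (q * x) := by
  refine tendsto_nhds_unique ((tendsto_add_atTop_iff_nat 1).2 (tendsto_pN hq hq1 x)) ?_
  simp only [pN_succ']
  exact (tendsto_pN hq hq1 _).const_mul _

lemma measurable_pN (q : ℝ) (N : ℕ) : Measurable (pN q N) := by
  unfold pN; fun_prop

lemma measurable_pI {q : ℝ} (hq : 0 < q) (hq1 : q < 1) : Measurable (pI q) :=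
  measurable_of_tendsto_metrizable (measurable_pN q)
    (tendsto_pi_nhds.2 fun x => tendsto_pN hq hq1 x)

/-! ### Mellin transforms of the weights -/

/-- A weight `1/g` bounded near `0` and decaying like `x^{-N}` has finite Mellin transform
on `0 < s < N`. -/
lemma integrable_mellin {g : ℝ → ℝ} (hg : Measurable g) (h1 : ∀ x, 0 < x → 1 ≤ g x) {c : ℝ}
    (hc : 0 < c) {N : ℕ} (h2 : ∀ x, 0 < x → c * x ^ N ≤ g x) {s : ℝ} (hs : 0 < s) (hsN : s < N) :
    IntegrableOn (fun x => x ^ (s - 1) / g x) (Ioi 0) := by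
  have hm : Measurable fun x : ℝ => x ^ (s - 1) / g x := by fun_prop
  rw [← Ioc_union_Ioi_eq_Ioi zero_le_one]
  refine IntegrableOn.union ?_ ?_
  · have hi : IntegrableOn (fun x : ℝ => x ^ (s - 1)) (Ioc 0 1) :=
      (intervalIntegrable_iff_integrableOn_Ioc_of_le zero_le_one).1
        (intervalIntegral.intervalIntegrable_rpow' (by linarith))
    refine Integrable.mono' hi hm.aestronglyMeasurable ?_
    refine (ae_restrict_iff' measurableSet_Ioc).2 (Eventually.of_forall fun x hx => ?_)
    have := h1 x hx.1
    have h0 : 0 ≤ x ^ (s - 1) := Real.rpow_nonneg hx.1.le _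
    rw [Real.norm_of_nonneg (by positivity)]
    exact div_le_self h0 this
  · have hi : IntegrableOn (fun x : ℝ => c⁻¹ * x ^ (s - 1 - N)) (Ioi 1) :=
      (integrableOn_Ioi_rpow_of_lt (by linarith) one_pos).const_mul _
    refine Integrable.mono' hi hm.aestronglyMeasurable ?_
    refine (ae_restrict_iff' measurableSet_Ioi).2 (Eventually.of_forall fun x hx => ?_)
    have hx0 : (0:ℝ) < x := lt_trans one_pos hx
    have h3 := h1 x hx0
    have h4 := h2 x hx0
    have h0 : 0 ≤ x ^ (s - 1) := Real.rpow_nonneg hx0.le _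
    rw [Real.norm_of_nonneg (by positivity), Real.rpow_sub_natCast hx0.ne']
    calc x ^ (s - 1) / g x ≤ x ^ (s - 1) / (c * x ^ N) := by gcongr
      _ = _ := by field_simp

lemma integrable_pN {q : ℝ} (hq : 0 < q) (hq1 : q < 1) {N : ℕ} {s : ℝ} (hs : 0 < s)
    (hsN : s < N) : IntegrableOn (fun x => x ^ (s - 1) / pN q N x) (Ioi 0) :=
  integrable_mellin (measurable_pN q N) (fun _ hx => one_le_pN hq N hx)
    (c := (q ^ N) ^ N) (by positivity) (fun _ hx => pow_le_pN hq hq1 N hx) hs hsN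

lemma integrable_pI {q : ℝ} (hq : 0 < q) (hq1 : q < 1) {s : ℝ} (hs : 0 < s) :
    IntegrableOn (fun x => x ^ (s - 1) / pI q x) (Ioi 0) := by
  obtain ⟨N, hN⟩ := exists_nat_gt s
  exact integrable_mellin (measurable_pI hq hq1)
    (fun _ hx => (one_le_pN hq N hx).trans (pN_le_pI hq hq1 N hx))
    (c := (q ^ N) ^ N) (by positivity)
    (fun _ hx => (pow_le_pN hq hq1 N hx).trans (pN_le_pI hq hq1 N hx)) hs hN

/-- The Mellin transform of `1/(-x;q)_N`. -/
noncomputable def mN (q : ℝ) (N : ℕ) (s : ℝ) : ℝ := ∫ x in Ioi (0:ℝ), x ^ (s - 1) / pN q N x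

/-- The Mellin transform of `1/(-x;q)_∞`; `mI q (s + k)` is the `k`-th moment of the weight
`x^{s-1}/(-x;q)_∞`. -/
noncomputable def mI (q : ℝ) (s : ℝ) : ℝ := ∫ x in Ioi (0:ℝ), x ^ (s - 1) / pI q x

lemma scale_integral {q : ℝ} (hq : 0 < q) (g : ℝ → ℝ) (s : ℝ) :
    ∫ x in Ioi (0:ℝ), x ^ (s - 1) / g (q * x) =
      q ^ (-s) * ∫ x in Ioi (0:ℝ), x ^ (s - 1) / g x := by
  have h := integral_comp_mul_left_Ioi (fun x => x ^ (s - 1) / g x) 0 hq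
  rw [mul_zero, smul_eq_mul] at h
  have h2 : ∫ x in Ioi (0:ℝ), x ^ (s - 1) / g (q * x) =
      q ^ (1 - s) * ∫ x in Ioi (0:ℝ), (q * x) ^ (s - 1) / g (q * x) := by
    rw [← integral_const_mul]
    refine setIntegral_congr_fun measurableSet_Ioi fun x hx => ?_
    have hx : (0:ℝ) < x := hx
    rw [Real.mul_rpow hq.le hx.le, ← mul_div_assoc, ← mul_assoc, ← Real.rpow_add hq]
    simp
  rw [h2, h, ← mul_assoc]
  congr 1
  rw [← Real.rpow_neg_one q, ← Real.rpow_add hq]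
  congr 1; ring

lemma rpow_add_one_sub {x : ℝ} (hx : 0 < x) (s : ℝ) : x ^ (s + 1 - 1) = x ^ (s - 1) * x := by
  rw [← Real.rpow_add_one hx.ne']; congr 1; ring

/-- Follows from `(-x;q)_∞ = (1+x)(-qx;q)_∞` and the substitution `x ↦ qx`. -/
lemma mI_add_one {q : ℝ} (hq : 0 < q) (hq1 : q < 1) {s : ℝ} (hs : 0 < s) :
    mI q (s + 1) = (q ^ (-s) - 1) * mI q s := by
  have h : q ^ (-s) * mI q s = mI q s + mI q (s + 1) := by
    unfold mI
    rw [← scale_integral hq, ← integral_add (integrable_pI hq hq1 hs)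
      (integrable_pI hq hq1 (by linarith))]
    refine setIntegral_congr_fun measurableSet_Ioi fun x hx => ?_
    have hx : (0:ℝ) < x := hx
    have h1 : 0 < pI q (q * x) :=
      one_pos.trans_le ((one_le_pN hq 0 (by positivity)).trans
        (pN_le_pI hq hq1 0 (by positivity)))
    have h2 : 0 < 1 + x := by positivity
    rw [rpow_add_one_sub hx, pI_eq hq hq1 x]
    field_simp
  linarith

/-- Comparing `(-x;q)_{N+1} = (1+x)(-qx;q)_N = (-x;q)_N (1+xq^N)` eliminates the shifted
Mellin transform and leaves a recurrence in `N` alone. -/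
lemma mN_succ {q : ℝ} (hq : 0 < q) (hq1 : q < 1) {N : ℕ} {s : ℝ} (hs : 0 < s) (hsN : s < N) :
    (1 - q ^ N) * mN q (N + 1) s = (1 - q ^ (N - s)) * mN q N s := by
  have hi1 := integrable_pN hq hq1 (N := N + 1) hs (by push_cast; linarith)
  have hi2 := integrable_pN hq hq1 (N := N + 1) (s := s + 1) (by linarith)
    (by push_cast; linarith)
  have h : q ^ (-s) * mN q N s = mN q (N + 1) s + mN q (N + 1) (s + 1) := by
    unfold mN
    rw [← scale_integral hq, ← integral_add hi1 hi2]
    refine setIntegral_congr_fun measurableSet_Ioi fun x hx => ?_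
    have hx : (0:ℝ) < x := hx
    have h1 : 0 < pN q N (q * x) := one_pos.trans_le (one_le_pN hq N (by positivity))
    have h2 : 0 < 1 + x := by positivity
    rw [rpow_add_one_sub hx, pN_succ']
    field_simp
  have h' : mN q N s = mN q (N + 1) s + q ^ N * mN q (N + 1) (s + 1) := by
    unfold mN
    rw [← integral_const_mul, ← integral_add hi1 (hi2.const_mul _)]
    refine setIntegral_congr_fun measurableSet_Ioi fun x hx => ?_
    have hx : (0:ℝ) < x := hx
    have h1 : 0 < pN q N x := one_pos.trans_le (one_le_pN hq N (by positivity))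
    have h2 : 0 < 1 + x * q ^ N := by positivity
    rw [rpow_add_one_sub hx, pN_succ]
    field_simp
  have h3 : q ^ (N - s) = q ^ N * q ^ (-s) := by
    rw [sub_eq_add_neg, Real.rpow_add hq, Real.rpow_natCast]
  rw [h3]
  linear_combination q ^ N * h - h'

lemma tendsto_mN {q : ℝ} (hq : 0 < q) (hq1 : q < 1) {K : ℕ} {s : ℝ} (hs : 0 < s) (hK : s < K) :
    Tendsto (fun N => mN q (N + K) s) atTop (𝓝 (mI q s)) := by
  refine tendsto_integral_of_dominated_convergence (fun x => x ^ (s - 1) / pN q K x) ?_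
    (integrable_pN hq hq1 hs hK) ?_ ?_
  · intro N
    have := measurable_pN q (N + K)
    exact (by fun_prop : Measurable fun x => x ^ (s - 1) / pN q (N + K) x).aestronglyMeasurable
  · intro N
    refine (ae_restrict_iff' measurableSet_Ioi).2 (Eventually.of_forall fun x hx => ?_)
    have hx : (0:ℝ) < x := hx
    have h1 := one_le_pN hq K hx
    have h2 : pN q K x ≤ pN q (N + K) x := pN_mono hq hx (Nat.le_add_left _ _)
    have h3 := h1.trans h2
    have h0 : 0 ≤ x ^ (s - 1) := Real.rpow_nonneg hx.le _
    rw [Real.norm_of_nonneg (by positivity)]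
    gcongr
  · refine (ae_restrict_iff' measurableSet_Ioi).2 (Eventually.of_forall fun x hx => ?_)
    have hx : (0:ℝ) < x := hx
    have h1 := (one_le_pN hq 0 hx).trans (pN_le_pI hq hq1 0 hx)
    exact tendsto_const_nhds.div ((tendsto_add_atTop_iff_nat K).2 (tendsto_pN hq hq1 x))
      (by positivity)

/-! ### Evaluation of the integrals -/

/-- Euler's integral `∫_0^∞ x^{s-1}/(1+x) dx = π / sin(πs)`, from the Beta integral by the
substitution `t = x/(1+x)`. -/
lemma mN_one (q : ℝ) {s : ℝ} (hs : 0 < s) (hs1 : s < 1) : mN q 1 s = π / Real.sin (π * s) := by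
  have hB : Complex.betaIntegral s (1 - s) = ((π / Real.sin (π * s) : ℝ) : ℂ) := by
    have h := Complex.Gamma_mul_Gamma_eq_betaIntegral (s := s) (t := 1 - s) (by simpa using hs)
      (by simpa using hs1)
    rw [Complex.Gamma_mul_Gamma_one_sub] at h
    simp at h
    rw [← h]
    push_cast
    rfl
  have himg : (fun x : ℝ => x / (1 + x)) '' Ioi 0 = Ioo 0 1 := by
    ext t
    constructor
    · rintro ⟨x, hx, rfl⟩
      have hx : (0:ℝ) < x := hx
      refine ⟨by positivity, ?_⟩
      simp only
      rw [div_lt_one (by positivity)]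
      linarith
    · rintro ⟨h0, h1⟩
      have : 0 < 1 - t := by linarith
      refine ⟨t / (1 - t), div_pos h0 this, ?_⟩
      simp only
      field_simp
      ring
  have hcv := integral_image_eq_integral_abs_deriv_smul (s := Ioi (0:ℝ))
    (f := fun x : ℝ => x / (1 + x)) (f' := fun x => 1 / (1 + x) ^ 2) measurableSet_Ioi ?_ ?_
    (fun t : ℝ => (t : ℂ) ^ ((s : ℂ) - 1) * (1 - (t : ℂ)) ^ ((1 - s : ℂ) - 1))
  · rw [himg, ← integral_Ioc_eq_integral_Ioo, ← intervalIntegral.integral_of_le zero_le_one] at hcv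
    change Complex.betaIntegral s (1 - s) = _ at hcv
    rw [hB] at hcv
    have h2 : ((mN q 1 s : ℝ) : ℂ) = ((π / Real.sin (π * s) : ℝ) : ℂ) := by
      rw [hcv, mN, ← integral_complex_ofReal]
      refine setIntegral_congr_fun measurableSet_Ioi fun x hx => ?_
      have hx : (0:ℝ) < x := hx
      have h1 : 0 < 1 + x := by positivity
      have e1 : (1 - ((x / (1 + x) : ℝ) : ℂ)) = (((1 + x)⁻¹ : ℝ) : ℂ) := by
        rw [← Complex.ofReal_one, ← Complex.ofReal_sub]
        congr 1; field_simp; ring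
      rw [e1, Complex.real_smul]
      have e2 : ((s : ℂ) - 1) = ((s - 1 : ℝ) : ℂ) := by push_cast; rfl
      have e3 : ((1 - s : ℂ) - 1) = ((-s : ℝ) : ℂ) := by push_cast; ring
      rw [e2, e3, ← Complex.ofReal_cpow (by positivity), ← Complex.ofReal_cpow (by positivity),
        ← Complex.ofReal_mul, ← Complex.ofReal_mul]
      congr 1
      rw [abs_of_pos (by positivity), Real.div_rpow hx.le h1.le, Real.inv_rpow h1.le,
        Real.rpow_neg h1.le, inv_inv, Real.rpow_sub h1, Real.rpow_one]
      have : 0 < (1 + x) ^ s := Real.rpow_pos_of_pos h1 _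
      simp only [pN, Finset.range_one, Finset.prod_singleton, pow_zero, mul_one]
      field_simp
    exact_mod_cast h2
  · intro x hx
    have hx : (0:ℝ) < x := hx
    have h1 : 1 + x ≠ 0 := by positivity
    have := (hasDerivAt_id x).div ((hasDerivAt_id x).const_add 1) h1
    refine (this.congr_deriv ?_).hasDerivWithinAt
    simp
  · intro x hx y hy h
    have hx : (0:ℝ) < x := hx
    have hy : (0:ℝ) < y := hy
    simp only at h
    field_simp at h
    linarith

/-- `log((1+x)/(1+qx))/(1-q)` is a primitive of `1/((1+x)(1+qx))`. -/
lemma mN_two_one {q : ℝ} (hq : 0 < q) (hq1 : q < 1) :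
    mN q 2 1 = -Real.log q / (1 - q) := by
  have hne : 1 - q ≠ 0 := by linarith
  have h := integral_Ioi_of_hasDerivAt_of_nonneg' (a := 0)
    (g := fun x => (Real.log ((1 + x) / (1 + q * x))) / (1 - q))
    (g' := fun x => x ^ ((1:ℝ) - 1) / pN q 2 x) (l := -Real.log q / (1 - q)) ?_ ?_ ?_
  · rw [mN, h]; simp
  · intro x hx
    have hx : (0:ℝ) ≤ x := hx
    have h1 : 1 + x ≠ 0 := by positivity
    have h2 : 1 + q * x ≠ 0 := by positivity
    have := (((hasDerivAt_id x).const_add 1).div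
      (((hasDerivAt_id x).const_mul q).const_add 1) h2).log (div_ne_zero h1 h2)
    refine (this.div_const (1 - q)).congr_deriv ?_
    simp [pN, Finset.prod_range_succ]
    rw [mul_comm x q]
    field_simp
    ring
  · intro x hx
    have hx : (0:ℝ) < x := hx
    have := one_le_pN hq 2 hx
    positivity
  · refine Tendsto.div_const ?_ _
    rw [← Real.log_inv]
    refine Tendsto.log ?_ (inv_ne_zero hq.ne')
    have h3 : Tendsto (fun x : ℝ => (x⁻¹ + 1) / (x⁻¹ + q)) atTop (𝓝 ((0 + 1) / (0 + q))) :=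
      (tendsto_inv_atTop_zero.add_const 1).div (tendsto_inv_atTop_zero.add_const q) (by simp [hq.ne'])
    rw [zero_add, zero_add, one_div] at h3
    refine h3.congr' ?_
    filter_upwards [eventually_gt_atTop 0] with x hx
    field_simp

lemma mI_one {q : ℝ} (hq : 0 < q) (hq1 : q < 1) : mI q 1 = -Real.log q := by
  have hN : ∀ N : ℕ, (1 - q ^ (N + 1)) * mN q (N + 2) 1 = -Real.log q := by
    intro N
    induction N with
    | zero =>
      have hne : 1 - q ≠ 0 := by linarith
      rw [zero_add, pow_one, zero_add, mN_two_one hq hq1]; field_simp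
    | succ N ih =>
      rw [← ih]
      have := mN_succ hq hq1 (N := N + 2) one_pos (by push_cast; linarith)
      rw [show N + 1 + 2 = N + 2 + 1 by ring, show N + 1 + 1 = N + 2 by ring, this]
      have e : q ^ (((N + 2 : ℕ) : ℝ) - 1) = q ^ (N + 1) := by
        rw [← Real.rpow_natCast]; congr 1; push_cast; ring
      rw [e]
  have h1 := tendsto_mN hq hq1 (K := 2) one_pos (by norm_num)
  have h2 : Tendsto (fun N : ℕ => 1 - q ^ (N + 1)) atTop (𝓝 (1 - 0)) :=
    tendsto_const_nhds.sub
      ((tendsto_add_atTop_iff_nat 1).2 (tendsto_pow_atTop_nhds_zero_of_lt_one hq.le hq1))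
  have h3 := h2.mul h1
  simp only [hN] at h3
  rw [sub_zero, one_mul] at h3
  exact (tendsto_nhds_unique h3 tendsto_const_nhds)

/-- Ramanujan's integral on `0 < s < 1`, with denominators cleared: iterate `mN_succ` from
`mN_one` and let `N → ∞`. -/
lemma mI_reflect_base {q : ℝ} (hq : 0 < q) (hq1 : q < 1) {s : ℝ} (hs : 0 < s) (hs1 : s < 1) :
    mI q s * pI q (-q) * Real.sin (π * s) = π * pI q (-q ^ (1 - s)) := by
  have hsin : Real.sin (π * s) ≠ 0 :=
    (Real.sin_pos_of_pos_of_lt_pi (by positivity) (by nlinarith [Real.pi_pos])).ne'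
  have hN : ∀ N : ℕ, mN q (N + 1) s * pN q N (-q) * Real.sin (π * s) =
      π * pN q N (-q ^ (1 - s)) := by
    intro N
    induction N with
    | zero =>
      rw [zero_add, mN_one q hs hs1]
      simp only [pN, Finset.range_zero, Finset.prod_empty]
      field_simp
    | succ N ih =>
      have h := mN_succ hq hq1 (N := N + 1) hs (by push_cast; linarith [Nat.cast_nonneg (α := ℝ) N])
      have e : q ^ (((N + 1 : ℕ) : ℝ) - s) = q ^ (1 - s) * q ^ N := by
        rw [← Real.rpow_natCast, ← Real.rpow_add hq]; congr 1; push_cast; ring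
      rw [e] at h
      rw [pN_succ, pN_succ]
      linear_combination (1 - q ^ (1 - s) * q ^ N) * ih + pN q N (-q) * Real.sin (π * s) * h
  have h1 := ((tendsto_mN hq hq1 (K := 1) hs (by simpa using hs1)).mul
    (tendsto_pN hq hq1 (-q))).mul_const (Real.sin (π * s))
  have h2 := (tendsto_pN hq hq1 (-q ^ (1 - s))).const_mul π
  simp only [hN] at h1
  exact tendsto_nhds_unique h1 h2

/-- Ramanujan's integral `∫_0^∞ x^{s-1}/(-x;q)_∞ dx = π (q^{1-s};q)_∞ / (sin(πs) (q;q)_∞)`, with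
denominators cleared. -/
lemma mI_reflect {q : ℝ} (hq : 0 < q) (hq1 : q < 1) {s : ℝ} (hs : 0 < s)
    (hk : ¬ ∃ k : ℕ, s = k) :
    mI q s * pI q (-q) * Real.sin (π * s) = π * pI q (-q ^ (1 - s)) := by
  have key : ∀ (k : ℕ) (t : ℝ), 0 < t → t < 1 → mI q (t + k) * pI q (-q) * Real.sin (π * (t + k)) =
      π * pI q (-q ^ (1 - (t + k))) := by
    intro k t ht ht1
    induction k with
    | zero => simpa using mI_reflect_base hq hq1 ht ht1
    | succ k ih =>
      have h := mI_add_one hq hq1 (s := t + k) (by positivity)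
      have e1 : t + ((k + 1 : ℕ) : ℝ) = t + k + 1 := by push_cast; ring
      rw [e1, h, mul_add, mul_one, Real.sin_add_pi, pI_eq hq hq1 (-q ^ (1 - (t + k + 1)))]
      have e2 : q * -q ^ (1 - (t + k + 1)) = -q ^ (1 - (t + k)) := by
        rw [mul_neg, mul_comm, ← Real.rpow_add_one hq.ne']; congr 2; ring
      have e3 : q ^ (1 - (t + k + 1)) = q ^ (-(t + k)) := by congr 1; ring
      rw [e2, e3]
      linear_combination (1 - q ^ (-(t + k))) * ih
  have h := key ⌊s⌋₊ (s - ⌊s⌋₊) ?_ ?_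
  · simpa using h
  · rcases (Nat.floor_le hs.le).lt_or_eq with h | h
    · linarith
    · exact absurd ⟨_, h.symm⟩ hk
  · linarith [Nat.lt_floor_add_one s]

lemma pI_neg_q_ne_zero {q : ℝ} (hq : 0 < q) (hq1 : q < 1) : pI q (-q) ≠ 0 := by
  refine tprod_one_add_ne_zero_of_summable (fun k => ?_) (summable_mul_pow hq hq1 (-q)).norm
  have h1 : q ^ (k + 1) < 1 := pow_lt_one₀ hq.le hq1 (by simp)
  rw [pow_succ] at h1
  nlinarith

lemma qPInf_ofReal {q : ℝ} (hq : 0 < q) (hq1 : q < 1) (y : ℝ) :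
    qPInf (y : ℂ) q = (pI q (-y) : ℝ) := by
  have h := (multipliable_pI hq hq1 (-y)).map_tprod Complex.ofRealHom Complex.continuous_ofReal
  unfold qPInf pI
  rw [Complex.ofRealHom_eq_coe] at h
  rw [h]
  refine tprod_congr fun k => ?_
  simp [sub_eq_add_neg]

/-! ### Finite `q`-identities -/

lemma qP_succ (a q : ℂ) (n : ℕ) : qP a q (n + 1) = qP a q n * (1 - a * q ^ n) :=
  Finset.prod_range_succ _ _

lemma qP_succ' (a q : ℂ) (n : ℕ) : qP a q (n + 1) = (1 - a) * qP (a * q) q n := by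
  unfold qP
  rw [Finset.prod_range_succ', mul_comm]
  simp only [pow_zero, mul_one]
  congr 1
  refine Finset.prod_congr rfl fun k _ => ?_
  ring

lemma qP_add (a q : ℂ) (m n : ℕ) : qP a q (m + n) = qP a q m * qP (a * q ^ m) q n := by
  unfold qP
  rw [Finset.prod_range_add]
  congr 1
  refine Finset.prod_congr rfl fun k _ => ?_
  ring

lemma qP_zero (a q : ℂ) : qP a q 0 = 1 := by simp [qP]

lemma qP_eq_zero {a q : ℂ} {i n : ℕ} (hi : i < n) (h : a * q ^ i = 1) : qP a q n = 0 :=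
  Finset.prod_eq_zero (Finset.mem_range.2 hi) (by rw [h, sub_self])

lemma qP_inv_eq_zero {q : ℂ} (hq : q ≠ 0) {n k : ℕ} (h : n < k) : qP (q ^ n)⁻¹ q k = 0 :=
  qP_eq_zero h (by field_simp)

/-- The terminating `q`-binomial theorem, by the `q`-Pascal rule. -/
lemma q_binomial {q : ℂ} (hq : q ≠ 0) (hP : ∀ k, qP q q k ≠ 0) (n : ℕ) (z : ℂ) :
    ∑ k ∈ Finset.range (n + 1), qP (q ^ n)⁻¹ q k / qP q q k * z ^ k = qP (z * (q ^ n)⁻¹) q n := by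
  induction n with
  | zero => simp [qP]
  | succ n ih =>
    have hshift : (q ^ (n + 1))⁻¹ * q = (q ^ n)⁻¹ := by rw [pow_succ]; field_simp
    have pascal : ∀ k, qP (q ^ (n + 1))⁻¹ q (k + 1) / qP q q (k + 1) =
        qP (q ^ n)⁻¹ q (k + 1) / qP q q (k + 1) -
          (q ^ (n + 1))⁻¹ * (qP (q ^ n)⁻¹ q k / qP q q k) := by
      intro k
      have h1 := hP (k + 1)
      rw [qP_succ', hshift, qP_succ (q ^ n)⁻¹]
      rw [qP_succ q] at h1 ⊢
      have h2 := (mul_ne_zero_iff.1 h1).2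
      have h3 := hP k
      field_simp
      ring
    rw [Finset.sum_range_succ', Finset.sum_congr rfl fun k _ => by rw [pascal k]]
    have h4 := Finset.sum_range_succ' (fun k => qP (q ^ n)⁻¹ q k / qP q q k * z ^ k) (n + 1)
    rw [Finset.sum_range_succ, qP_inv_eq_zero hq (Nat.lt_succ_self n), ih] at h4
    rw [qP_succ', mul_assoc, hshift]
    simp only [sub_mul, Finset.sum_sub_distrib]
    have h5 : ∑ k ∈ Finset.range (n + 1),
        (q ^ (n + 1))⁻¹ * (qP (q ^ n)⁻¹ q k / qP q q k) * z ^ (k + 1) =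
        (q ^ (n + 1))⁻¹ * z * qP (z * (q ^ n)⁻¹) q n := by
      rw [← ih, Finset.mul_sum]
      exact Finset.sum_congr rfl fun k _ => by ring
    rw [h5]
    simp only [qP_zero] at h4 ⊢
    linear_combination -h4

/-- The sum that carries orthogonality. Peeling the last linear factor off `(aq^k;q)_j` lowers `j`
and turns `e` into `e` or `e + 1`; at `j = 0` the `q`-binomial theorem gives `(q^{e-n};q)_n`, which
vanishes unless `e = 0`. -/
lemma q_sum {q : ℂ} (hq : q ≠ 0) (hP : ∀ k, qP q q k ≠ 0) (a : ℂ) (n j : ℕ) : ∀ e, j + e ≤ n →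
    ∑ k ∈ Finset.range (n + 1), qP (q ^ n)⁻¹ q k / qP q q k * (q ^ e) ^ k * qP (a * q ^ k) q j =
      if e = 0 then qP (q ^ n)⁻¹ q n else 0 := by
  induction j with
  | zero =>
    intro e he
    simp only [qP_zero, mul_one]
    rw [q_binomial hq hP]
    split_ifs with h
    · simp [h]
    · refine qP_eq_zero (i := n - e) (by omega) ?_
      rw [mul_right_comm, ← pow_add, show e + (n - e) = n by omega]
      field_simp
  | succ j ih =>
    intro e he
    have h1 := ih e (by omega)
    have h2 := ih (e + 1) (by omega)
    rw [if_neg (by omega)] at h2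
    rw [← h1]
    have : ∀ k, qP (q ^ n)⁻¹ q k / qP q q k * (q ^ e) ^ k * qP (a * q ^ k) q (j + 1) =
        qP (q ^ n)⁻¹ q k / qP q q k * (q ^ e) ^ k * qP (a * q ^ k) q j - a * q ^ j *
        (qP (q ^ n)⁻¹ q k / qP q q k * (q ^ (e + 1)) ^ k * qP (a * q ^ k) q j) := by
      intro k
      rw [qP_succ]; ring
    simp only [this, Finset.sum_sub_distrib]
    rw [← Finset.mul_sum, h2, mul_zero, sub_zero]

lemma tri_succ (n : ℕ) : (n + 1) * (n + 1 - 1) / 2 = n * (n - 1) / 2 + n := by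
  simpa using Nat.triangle_succ n

lemma tri_add (k j : ℕ) : (k + j) * (k + j - 1) / 2 =
    k * (k - 1) / 2 + j * (j - 1) / 2 + k * j := by
  induction j with
  | zero => simp
  | succ j ih => rw [← add_assoc, tri_succ, tri_succ, ih]; ring

lemma qP_inv_self {q : ℂ} (hq : q ≠ 0) (n : ℕ) :
    qP (q ^ n)⁻¹ q n * q ^ (n * (n - 1) / 2 + n) = (-1) ^ n * qP q q n := by
  induction n with
  | zero => simp [qP]
  | succ n ih =>
    have hshift : (q ^ (n + 1))⁻¹ * q = (q ^ n)⁻¹ := by rw [pow_succ]; field_simp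
    rw [qP_succ', hshift, tri_succ, pow_add, qP_succ q, pow_succ (-1 : ℂ)]
    have : (1 - (q ^ (n + 1))⁻¹) * q ^ (n + 1) = q ^ (n + 1) - 1 := by field_simp
    linear_combination (q ^ (n + 1) - 1) * ih + qP (q ^ n)⁻¹ q n * q ^ (n * (n - 1) / 2 + n) * this

lemma qP_inv_self_sq {q : ℂ} (hq : q ≠ 0) (n : ℕ) :
    qP (q ^ n)⁻¹ q n ^ 2 * (q ^ (n * n) * q ^ n) = qP q q n ^ 2 := by
  have h := qP_inv_self hq n
  have e : n * n + n = 2 * (n * (n - 1) / 2 + n) := by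
    have h2 := tri_succ n
    have h3 : Even ((n + 1) * (n + 1 - 1)) := by simpa [mul_comm] using Nat.even_mul_succ_self n
    have h4 := Nat.div_mul_cancel h3.two_dvd
    simp only [Nat.add_sub_cancel] at h2 h4
    rw [← h2]; nlinarith
  rw [← pow_add, e, mul_comm 2, pow_mul, ← mul_pow, h, mul_pow, ← pow_mul, mul_comm n 2, pow_mul]
  simp

/-! ### Orthogonality -/

/-- The coefficient of `x^k` in `Lₙ^{(α)}(x;q)`, with `a = q^{α+1}`. -/
noncomputable def lagC (a q : ℂ) (n k : ℕ) : ℂ :=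
  qP a q n / qP q q n *
    (qP (q ^ n)⁻¹ q k / (qP q q k * qP a q k) * q ^ (k * (k - 1) / 2) * (q ^ n * a) ^ k)

lemma rq_add {q : ℝ} (hq : 0 < q) (x y : ℝ) : rq q (x + y) = rq q x * rq q y := by
  unfold rq; rw [Real.rpow_add hq]; push_cast; rfl

lemma rq_natCast (q : ℝ) (n : ℕ) : rq q n = (q : ℂ) ^ n := by
  unfold rq; rw [Real.rpow_natCast]; push_cast; rfl

lemma qLag_eq_sum {q : ℝ} (hq : 0 < q) (n : ℕ) (α : ℝ) (x : ℂ) :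
    qLag n α q x = ∑ k ∈ Finset.range (n + 1), lagC (rq q (α + 1)) q n k * x ^ k := by
  have hqc : (q : ℂ) ≠ 0 := by exact_mod_cast hq.ne'
  unfold qLag qHyp
  rw [tsum_eq_sum (s := Finset.range (n + 1)), Finset.mul_sum]
  · refine Finset.sum_congr rfl fun k _ => ?_
    rw [add_assoc (n : ℝ), rq_add hq (n : ℝ), rq_natCast]
    simp only [List.map_cons, List.map_nil, List.prod_cons, List.prod_nil, mul_one,
      List.length_cons, List.length_nil, zpow_neg, zpow_natCast, lagC]
    have e : (-((q : ℂ) ^ n * rq q (α + 1)) * x) ^ k =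
        (-1) ^ k * ((q : ℂ) ^ n * rq q (α + 1)) ^ k * x ^ k := by
      rw [← mul_pow, ← mul_pow]; congr 1; ring
    have e2 : ((-1 : ℂ) ^ k) * (-1) ^ k = 1 := by rw [← mul_pow]; simp
    rw [e]
    simp only [zero_add, Nat.add_sub_cancel, pow_one]
    linear_combination (qP (rq q (α + 1)) q n / qP q q n *
      (qP ((q : ℂ) ^ n)⁻¹ q k / (qP q q k * qP (rq q (α + 1)) q k) * (q : ℂ) ^ (k * (k - 1) / 2) *
        ((q : ℂ) ^ n * rq q (α + 1)) ^ k)) * x ^ k * e2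
  · intro k hk
    have hk : n < k := by simpa using hk
    simp [qP_inv_eq_zero hqc hk]

/-- The moments of the weight `x^α/(-x;q)_∞`, relative to the zeroth one. -/
lemma moment_eq {q : ℝ} (hq : 0 < q) (hq1 : q < 1) {α : ℝ} (hα : -1 < α) (k : ℕ) :
    (mI q (α + 1 + k) : ℂ) * (rq q (α + 1) ^ k * (q : ℂ) ^ (k * (k - 1) / 2)) =
      mI q (α + 1) * qP (rq q (α + 1)) q k := by
  induction k with
  | zero => simp [qP]
  | succ k ih =>
    have hpos : 0 < α + 1 + k := by have := Nat.cast_nonneg (α := ℝ) k; linarith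
    have e1 : α + 1 + ((k + 1 : ℕ) : ℝ) = α + 1 + k + 1 := by push_cast; ring
    have e2 : ((q ^ (-(α + 1 + k)) : ℝ) : ℂ) * (rq q (α + 1) * (q : ℂ) ^ k) = 1 := by
      rw [← rq_natCast, ← rq_add hq]
      unfold rq
      rw [← Complex.ofReal_mul, ← Real.rpow_add hq, neg_add_cancel, Real.rpow_zero,
        Complex.ofReal_one]
    rw [e1, mI_add_one hq hq1 hpos, tri_succ, qP_succ, ← mul_assoc (mI q (α + 1) : ℂ), ← ih]
    push_cast at e2 ⊢
    linear_combination ((mI q (α + 1 + k) : ℂ) * (rq q (α + 1) ^ k *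
      (q : ℂ) ^ (k * (k - 1) / 2))) * e2

lemma qP_ofReal_ne_zero {q : ℝ} (hq : 0 < q) (hq1 : q < 1) {y : ℝ} (hy : 0 < y) (hy1 : y < 1)
    (k : ℕ) : qP (y : ℂ) q k ≠ 0 := by
  refine Finset.prod_ne_zero_iff.2 fun i _ => ?_
  have h : y * q ^ i < 1 := mul_lt_one_of_nonneg_of_lt_one_left hy.le hy1
    (pow_le_one₀ hq.le hq1.le)
  have : (1 - y * q ^ i : ℝ) ≠ 0 := by linarith
  exact_mod_cast this

lemma qP_rq_ne_zero {q : ℝ} (hq : 0 < q) (hq1 : q < 1) {α : ℝ} (hα : -1 < α) (k : ℕ) :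
    qP (rq q (α + 1)) q k ≠ 0 :=
  qP_ofReal_ne_zero hq hq1 (Real.rpow_pos_of_pos hq _)
    (Real.rpow_lt_one hq.le hq1 (by linarith)) k

/-- The integral of `x^j Lₙ` against the weight, written through the moments, for `j ≤ n`. -/
lemma lag_moment {q : ℝ} (hq : 0 < q) (hq1 : q < 1) {α : ℝ} (hα : -1 < α) {n j : ℕ}
    (hj : j ≤ n) :
    (∑ k ∈ Finset.range (n + 1), lagC (rq q (α + 1)) q n k * (mI q (α + 1 + (k + j : ℕ)) : ℂ)) *
      (rq q (α + 1) ^ j * (q : ℂ) ^ (j * (j - 1) / 2)) =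
    mI q (α + 1) * (qP (rq q (α + 1)) q n / qP q q n) *
      if j = n then qP ((q : ℂ) ^ n)⁻¹ q n else 0 := by
  have hqc : (q : ℂ) ≠ 0 := by exact_mod_cast hq.ne'
  have hP : ∀ k, qP (q : ℂ) q k ≠ 0 := qP_ofReal_ne_zero hq hq1 hq hq1
  have hs := q_sum hqc hP (rq q (α + 1)) n j (n - j) (by omega)
  have hif : (if j = n then qP ((q : ℂ) ^ n)⁻¹ q n else 0) =
      if n - j = 0 then qP ((q : ℂ) ^ n)⁻¹ q n else 0 := by
    congr 1; apply propext; omega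
  rw [hif, ← hs, Finset.sum_mul, Finset.mul_sum]
  refine Finset.sum_congr rfl fun k _ => ?_
  have h := moment_eq hq hq1 hα (k + j)
  have ha := qP_rq_ne_zero hq hq1 hα k
  have h0 := hP k
  have h0' := hP n
  rw [qP_add, tri_add] at h
  obtain ⟨e, rfl⟩ := Nat.exists_eq_add_of_le hj
  rw [Nat.add_sub_cancel_left]
  unfold lagC
  generalize (mI q (α + 1 + (k + j : ℕ)) : ℂ) = X at *
  generalize qP ((q : ℂ) ^ (j + e))⁻¹ q k = Y at *
  field_simp
  linear_combination qP (rq q (α + 1)) q (j + e) * Y * (q : ℂ) ^ (e * k) * h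

lemma mul_eq_sum {q : ℝ} (hq : 0 < q) (hq1 : q < 1) (α : ℝ) (m n : ℕ) {x : ℝ} (hx : 0 < x) :
    qLag m α q x * qLag n α q x * ((x ^ α : ℝ) : ℂ) / qPInf (-(x : ℂ)) q =
      ∑ j ∈ Finset.range (m + 1), ∑ k ∈ Finset.range (n + 1),
        lagC (rq q (α + 1)) q m j * lagC (rq q (α + 1)) q n k *
          ((x ^ (α + 1 + (k + j : ℕ) - 1) / pI q x : ℝ) : ℂ) := by
  rw [qLag_eq_sum hq, qLag_eq_sum hq, Finset.sum_mul_sum, ← Complex.ofReal_neg,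
    qPInf_ofReal hq hq1, neg_neg, Finset.sum_mul, Finset.sum_div]
  refine Finset.sum_congr rfl fun j _ => ?_
  rw [Finset.sum_mul, Finset.sum_div]
  refine Finset.sum_congr rfl fun k _ => ?_
  have e : α + 1 + (k + j : ℕ) - 1 = α + (k + j : ℕ) := by ring
  rw [e, Real.rpow_add_natCast hx.ne']
  push_cast
  ring

lemma integral_eq_sum {q : ℝ} (hq : 0 < q) (hq1 : q < 1) {α : ℝ} (hα : -1 < α) (m n : ℕ) :
    ∫ x in Ioi (0:ℝ), qLag m α q x * qLag n α q x * ((x ^ α : ℝ) : ℂ) / qPInf (-(x : ℂ)) q =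
      ∑ j ∈ Finset.range (m + 1), lagC (rq q (α + 1)) q m j *
        ∑ k ∈ Finset.range (n + 1), lagC (rq q (α + 1)) q n k *
          (mI q (α + 1 + (k + j : ℕ)) : ℂ) := by
  rw [setIntegral_congr_fun measurableSet_Ioi fun x hx => mul_eq_sum hq hq1 α m n hx]
  have hi : ∀ j k : ℕ, Integrable (fun x : ℝ => lagC (rq q (α + 1)) q m j *
      lagC (rq q (α + 1)) q n k * ((x ^ (α + 1 + (k + j : ℕ) - 1) / pI q x : ℝ) : ℂ))
      (volume.restrict (Ioi 0)) := fun j k =>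
    ((integrable_pI hq hq1
      (by have := Nat.cast_nonneg (α := ℝ) (k + j); linarith)).ofReal).const_mul _
  rw [integral_finsetSum _ fun j _ => integrable_finsetSum _ fun k _ => hi j k]
  refine Finset.sum_congr rfl fun j _ => ?_
  rw [integral_finsetSum _ fun k _ => hi j k, Finset.mul_sum]
  refine Finset.sum_congr rfl fun k _ => ?_
  rw [integral_const_mul, integral_complex_ofReal, mul_assoc]
  rfl

lemma orthogonality_of_le {q : ℝ} (hq : 0 < q) (hq1 : q < 1) {α : ℝ} (hα : -1 < α) {m n : ℕ}
    (hmn : m ≤ n) :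
    ∫ x in Ioi (0:ℝ), qLag m α q x * qLag n α q x * ((x ^ α : ℝ) : ℂ) / qPInf (-(x : ℂ)) q =
      (if m = n then (1 : ℂ) else 0) / (q : ℂ) ^ n *
        (mI q (α + 1) * (qP (rq q (α + 1)) q n / qP q q n)) := by
  have hqc : (q : ℂ) ≠ 0 := by exact_mod_cast hq.ne'
  have hac : rq q (α + 1) ≠ 0 := by
    unfold rq; exact_mod_cast (Real.rpow_pos_of_pos hq _).ne'
  have hP : ∀ k, qP (q : ℂ) q k ≠ 0 := qP_ofReal_ne_zero hq hq1 hq hq1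
  have hlow : ∀ j < n, ∑ k ∈ Finset.range (n + 1), lagC (rq q (α + 1)) q n k *
      (mI q (α + 1 + (k + j : ℕ)) : ℂ) = 0 := by
    intro j hj
    have h := lag_moment hq hq1 hα hj.le
    rw [if_neg hj.ne, mul_zero] at h
    exact (mul_eq_zero.1 h).resolve_right (by positivity)
  rw [integral_eq_sum hq hq1 hα, Finset.sum_range_succ, Finset.sum_eq_zero, zero_add]
  · split_ifs with h
    · subst h
      have h := lag_moment hq hq1 hα (le_refl m)
      rw [if_pos rfl] at h
      have h2 := qP_inv_self_sq hqc m
      have ha := qP_rq_ne_zero hq hq1 hα m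
      have h0 := hP m
      generalize ∑ k ∈ Finset.range (m + 1), lagC (rq q (α + 1)) q m k *
        (mI q (α + 1 + (k + m : ℕ)) : ℂ) = S at *
      unfold lagC
      generalize qP ((q : ℂ) ^ m)⁻¹ q m = Y at *
      field_simp at h ⊢
      apply mul_right_cancel₀ h0
      linear_combination Y * (q : ℂ) ^ (m * m) * (q : ℂ) ^ m * h +
        (mI q (α + 1) : ℂ) * qP (rq q (α + 1)) q m * h2
    · rw [hlow m (by omega)]; simp
  · intro j hj
    rw [hlow j (by have := Finset.mem_range.1 hj; omega), mul_zero]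

lemma orthogonality {q : ℝ} (hq : 0 < q) (hq1 : q < 1) {α : ℝ} (hα : -1 < α) (m n : ℕ) :
    ∫ x in Ioi (0:ℝ), qLag m α q x * qLag n α q x * ((x ^ α : ℝ) : ℂ) / qPInf (-(x : ℂ)) q =
      (if m = n then (1 : ℂ) else 0) / (q : ℂ) ^ n *
        (mI q (α + 1) * (qP (rq q (α + 1)) q n / qP q q n)) := by
  rcases le_total m n with h | h
  · exact orthogonality_of_le hq hq1 hα h
  · have := orthogonality_of_le hq hq1 hα h
    simp only [mul_comm (qLag n α q _)] at this
    rw [this]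
    rcases eq_or_ne m n with rfl | hne
    · rfl
    · simp [hne, hne.symm]

/-- The value of `∫_0^∞ x^k/(-x;q)_∞ dx`, with the denominator `q^{k(k+1)/2}` cleared. -/
lemma mI_nat {q : ℝ} (hq : 0 < q) (hq1 : q < 1) (k : ℕ) :
    (mI q ((k : ℝ) + 1) : ℂ) * rq q ((k : ℝ) * (k + 1) / 2) = -Real.log q * qP q q k := by
  have h := moment_eq hq hq1 (α := 0) (by norm_num) k
  have e1 : rq q (0 + 1) = q := by simp [rq]
  have e2 : rq q ((k : ℝ) * (k + 1) / 2) = (q : ℂ) ^ k * (q : ℂ) ^ (k * (k - 1) / 2) := by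
    rw [← pow_add, add_comm k, ← tri_succ, ← rq_natCast]
    congr 1
    rw [Nat.cast_div (by simpa [mul_comm] using (Nat.even_mul_succ_self k).two_dvd) (by norm_num)]
    push_cast
    simp [mul_comm]
  rw [e1, zero_add, mI_one hq hq1] at h
  rw [e2, add_comm (k : ℝ), h]
  push_cast; rfl

theorem stmt19 (q : ℝ) (hq : q ∈ Set.Ioo (0:ℝ) 1)
    (α : ℝ) (hα : -1 < α) (m n : ℕ) :
    (¬ (∃ k : ℕ, α = k) →
      ∫ x in Set.Ioi (0:ℝ),
          qLag m α q x * qLag n α q x * ((x ^ α : ℝ) : ℂ) / qPInf (-(x : ℂ)) q =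
        -((if m = n then (1 : ℂ) else 0) / (q : ℂ) ^ n) *
          ((π : ℂ) * qPInf (rq q (-α)) q * qP (rq q (α + 1)) q n /
            ((Real.sin (π * α) : ℂ) * qPInf q q * qP q q n))) ∧
    (∀ k : ℕ, α = k →
      ∫ x in Set.Ioi (0:ℝ),
          qLag m α q x * qLag n α q x * ((x ^ α : ℝ) : ℂ) / qPInf (-(x : ℂ)) q =
        -((if m = n then (1 : ℂ) else 0) / (q : ℂ) ^ n) *
          (qP ((q : ℂ) ^ (n + 1)) q k * (Real.log q : ℂ) / rq q (α * (α + 1) / 2))) := by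
  obtain ⟨hq0, hq1⟩ := hq
  have hP : ∀ k, qP (q : ℂ) q k ≠ 0 := qP_ofReal_ne_zero hq0 hq1 hq0 hq1
  rw [orthogonality hq0 hq1 hα]
  refine ⟨fun hk => ?_, fun k hk => ?_⟩
  · have hs : ¬ ∃ k : ℕ, α + 1 = k := by
      rintro ⟨k, h⟩
      rcases k with _ | k
      · simp at h; linarith
      · exact hk ⟨k, by push_cast at h; linarith⟩
    have hsin : Real.sin (π * α) ≠ 0 := by
      intro h
      obtain ⟨z, hz⟩ := Real.sin_eq_zero_iff.1 h
      have hz' : (z : ℝ) = α := by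
        rw [mul_comm] at hz; exact mul_left_cancel₀ Real.pi_ne_zero hz
      have hz0 : 0 ≤ z := by
        have : (-1 : ℝ) < z := by rw [hz']; exact hα
        have : -1 < z := by exact_mod_cast this
        omega
      lift z to ℕ using hz0
      exact hk ⟨z, by rw [← hz']; simp⟩
    have h := mI_reflect hq0 hq1 (s := α + 1) (by linarith) hs
    rw [mul_add, mul_one, Real.sin_add_pi, show 1 - (α + 1) = -α by ring] at h
    have h' : (mI q (α + 1) : ℂ) * pI q (-q) * -(Real.sin (π * α) : ℂ) = π * pI q (-q ^ (-α)) := by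
      exact_mod_cast h
    have hpc : (pI q (-q) : ℂ) ≠ 0 := by exact_mod_cast pI_neg_q_ne_zero hq0 hq1
    have hsc : (Real.sin (π * α) : ℂ) ≠ 0 := by exact_mod_cast hsin
    have h0 := hP n
    rw [show rq q (-α) = ((q ^ (-α) : ℝ) : ℂ) from rfl, qPInf_ofReal hq0 hq1,
      qPInf_ofReal hq0 hq1, ← h']
    generalize (Real.sin (π * α) : ℂ) = S at *
    field_simp
  · have hr : rq q (α * (α + 1) / 2) ≠ 0 := by
      unfold rq; exact_mod_cast (Real.rpow_pos_of_pos hq0 _).ne'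
    have h := mI_nat hq0 hq1 k
    rw [← hk] at h
    have h0 := hP n
    -- `(q;q)_k (q^{k+1};q)_n = (q;q)_{n+k} = (q;q)_n (q^{n+1};q)_k`
    have h1 : qP (q : ℂ) q k * qP (rq q (α + 1)) q n = qP q q n * qP ((q : ℂ) ^ (n + 1)) q k := by
      have e : rq q (α + 1) = (q : ℂ) * (q : ℂ) ^ k := by
        rw [hk, rq_add hq0, rq_natCast]; simp [rq, mul_comm]
      rw [e, ← qP_add, pow_succ', ← qP_add, add_comm]
    have h2 : (mI q (α + 1) : ℂ) * (qP (rq q (α + 1)) q n / qP q q n) =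
        -(qP ((q : ℂ) ^ (n + 1)) q k * (Real.log q : ℂ) / rq q (α * (α + 1) / 2)) := by
      field_simp
      linear_combination qP (rq q (α + 1)) q n * h - (Real.log q : ℂ) * h1
    rw [h2]; ring
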